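/- Let M be a finitely generated graded module over a standard positively graded Noetherian ring R with (R_0, m_0) Artinian local with infinite residue field, minimally generated by homogeneous elements of degrees d_1 ≥ ... ≥ d_s. Then for any finite set P = {p_1,...,p_n} of homogeneous prime ideals of R, there exists a homogeneous element x ∈ M of degree d_1 such that for all 1 ≤ i ≤ n, μ((M/Rx)_{p_i}) = max{0, μ(M_{p_i}) − 1}. -/

import Mathlib

open CategoryTheory

noncomputable section

variable (R₀ : Type) [CommRing R₀]
variable (R : Type) [CommRing R] [Algebra R₀ R]
variable (𝒜 : ℕ → Submodule R₀ R) [GradedAlgebra 𝒜]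

/-- The graded maximal ideal `𝔪 = 𝔪₀ ⊕ R₊` of a positively graded *local ring. -/
def gradedMaxIdeal [IsLocalRing R₀] : Ideal R :=
  Ideal.span ((algebraMap R₀ R) '' (IsLocalRing.maximalIdeal R₀)) ⊔
    (HomogeneousIdeal.irrelevant 𝒜).toIdeal

/-- The irrelevant ideal `R₊` of a positively graded ring. -/
def irrelevantIdeal : Ideal R := (HomogeneousIdeal.irrelevant 𝒜).toIdeal

/-- The graded ring `R` is standard graded over `R₀`: the degree-zero part is generated
by `1` and the ring is generated in degree one. -/
def IsStandardGraded : Prop :=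
  (𝒜 0 = Submodule.span R₀ {1}) ∧ ∀ n : ℕ, 𝒜 (n + 1) = 𝒜 1 * 𝒜 n

/-- A ℤ-grading (by additive subgroups) on an `R`-module `H`, compatible with the grading
`𝒜` of `R`: an internal direct sum decomposition `H = ⊕ ℋ_j` with `𝒜_i • ℋ_j ⊆ ℋ_{i+j}`. -/
def IsCompatibleGrading (H : Type) [AddCommGroup H] [Module R H]
    (ℋ : ℤ → AddSubgroup H) : Prop :=
  DirectSum.IsInternal ℋ ∧
    ∀ (i : ℕ) (j : ℤ) (a : R) (x : H), a ∈ 𝒜 i → x ∈ ℋ j → a • x ∈ ℋ ((i : ℤ) + j)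

/-- Local cohomology `H^i_q(M)` with support in the ideal `q`. -/
def localCoh (q : Ideal R) (i : ℕ) (M : Type) [AddCommGroup M] [Module R M] :
    ModuleCat R :=
  (localCohomology q i).obj (ModuleCat.of R M)

/-- The depth of `M` with respect to the ideal `q`. -/
def depthWrt (q : Ideal R) (M : Type) [AddCommGroup M] [Module R M] : ℕ∞ :=
  sSup {n : ℕ∞ | ∃ rs : List R, (rs.length : ℕ∞) = n ∧
    (∀ r ∈ rs, r ∈ q) ∧ RingTheory.Sequence.IsRegular M rs}

/-- The (classical) grade of an ideal. -/
def idealGrade (I : Ideal R) : ℕ∞ :=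
  sSup {n : ℕ∞ | ∃ rs : List R, (rs.length : ℕ∞) = n ∧
    (∀ r ∈ rs, r ∈ I) ∧ RingTheory.Sequence.IsRegular R rs}

/-- The height of an ideal. -/
def idealHeight (I : Ideal R) : ℕ∞ :=
  ⨅ (p : PrimeSpectrum R) (_ : I ≤ p.asIdeal), Order.height p

/-- The minimal number of generators of an ideal. -/
def idealMu (I : Ideal R) : ℕ∞ :=
  sInf {n : ℕ∞ | ∃ s : Finset R, (s.card : ℕ∞) = n ∧ Ideal.span (s : Set R) = I}

/-- The minimal number of generators of a module. -/
def moduleMu (M : Type) [AddCommGroup M] [Module R M] : ℕ∞ :=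
  sInf {n : ℕ∞ | ∃ s : Finset M, (s.card : ℕ∞) = n ∧ Submodule.span R (s : Set M) = ⊤}

/-- A Cohen-Macaulay local ring. -/
def IsCMLocalRing (A : Type) [CommRing A] [IsLocalRing A] : Prop :=
  (depthWrt A (IsLocalRing.maximalIdeal A) A : WithBot ℕ∞) = ringKrullDim A

/-- A Cohen-Macaulay ring: all localizations at maximal ideals are CM local rings. -/
def IsCMRing (A : Type) [CommRing A] : Prop :=
  ∀ (p : Ideal A), (hp : p.IsMaximal) →
    haveI := hp.isPrime
    IsCMLocalRing (Localization.AtPrime p)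

/-- The dimension of a module. -/
def moduleDim (M : Type) [AddCommGroup M] [Module R M] : WithBot ℕ∞ :=
  ringKrullDim (R ⧸ Module.annihilator R M)

/-- A module is Cohen-Macaulay w.r.t. an ideal `q` if it is zero or its depth w.r.t. `q`
equals its dimension. -/
def IsCMModuleWrt (q : Ideal R) (M : Type) [AddCommGroup M] [Module R M] : Prop :=
  Subsingleton M ∨ (depthWrt R q M : WithBot ℕ∞) = moduleDim R M

/-- `J = 𝔞 : I` is an `s`-residual intersection of `I`. -/
def IsResidualIntersection (a I J : Ideal R) (s : ℕ) : Prop :=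
  a ≤ I ∧ J = a.colon I ∧ idealMu R a ≤ s ∧ (s : ℕ∞) ≤ idealHeight R J

/-- A geometric `s`-residual intersection: moreover `ht (I + J) ≥ s + 1`. -/
def IsGeometricResidualIntersection (a I J : Ideal R) (s : ℕ) : Prop :=
  IsResidualIntersection R a I J s ∧ (s + 1 : ℕ∞) ≤ idealHeight R (I ⊔ J)

/-!
Write `κ(p)` for the residue field at a prime `p`. By Nakayama's lemma `μ(M_p)` is the dimension
of the fibre `κ(p) ⊗ M`, so passing to `M / R y` lowers `μ` at `p` by exactly one as soon as `y` is
nonzero in the fibre. Hence it suffices to find one `y ∈ M` of degree `d₁` that is nonzero in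
finitely many given nonzero fibres.

For a single prime this uses that `d₁` is the largest degree. If some `l ∈ R₁` lies outside `p`,
then each generator `x_j` may be multiplied by a power of `l` to reach degree `d₁`, and `l` is
invertible in `κ(p)`, so the degree `d₁` part spans the fibre. Otherwise `R₊ ⊆ p`, so `p` is
the graded maximal ideal, and graded Nakayama shows that `x₁ ∉ pM`.

For finitely many primes, the elements of the degree `d₁` part vanishing in the various fibres
form proper `R₀`-submodules, and finitely many of these cannot cover it because the residue field
of `R₀` is infinite.
-/

open scoped TensorProduct

section NumberOfGenerators

variable {A N : Type} [CommRing A] [AddCommGroup N] [Module A N]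

theorem moduleMu_le_encard {s : Set N} (hs : Submodule.span A s = ⊤) :
    moduleMu A N ≤ s.encard := by
  obtain hfin | hinf := s.finite_or_infinite
  · exact sInf_le ⟨hfin.toFinset, hfin.encard_eq_coe_toFinset_card.symm, by simpa using hs⟩
  · simp [hinf.encard_eq]

theorem moduleMu_eq_spanFinrank_top [Module.Finite A N] :
    moduleMu A N = (⊤ : Submodule A N).spanFinrank := by
  apply le_antisymm
  · obtain ⟨s, hcard, hspan⟩ :=
      (Module.Finite.fg_top (R := A) (M := N)).exists_span_finset_card_eq_spanFinrank
    exact sInf_le ⟨s, congrArg _ hcard, hspan⟩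
  · refine le_sInf ?_
    rintro _ ⟨s, rfl, hspan⟩
    simpa [hspan] using Submodule.spanFinrank_span_le_encard (R := A) (s : Set N)

theorem moduleMu_eq_finrank_residueField_tensorProduct [IsLocalRing A] [Module.Finite A N] :
    moduleMu A N =
      Module.finrank (IsLocalRing.ResidueField A) (IsLocalRing.ResidueField A ⊗[A] N) := by
  let e : (IsLocalRing.ResidueField A ⊗[A] (⊤ : Submodule A N)) ≃ₗ[IsLocalRing.ResidueField A]
      IsLocalRing.ResidueField A ⊗[A] N := Submodule.topEquiv.baseChange A _ _ _
  rw [moduleMu_eq_spanFinrank_top,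
    ← TensorProduct.spanFinrank_top_eq_of_residueField _ Module.Finite.fg_top,
    ← Module.finrank_eq_spanFinrank_of_free, e.finrank_eq]

theorem moduleMu_localizedModule_eq_finrank_fiber [Module.Finite A N] (p : Ideal A) [p.IsPrime] :
    moduleMu (Localization.AtPrime p) (LocalizedModule p.primeCompl N) =
      Module.finrank p.ResidueField (p.Fiber N) := by
  have : Module.Finite (Localization.AtPrime p) (LocalizedModule p.primeCompl N) :=
    Module.Finite.of_isLocalizedModule p.primeCompl (LocalizedModule.mkLinearMap p.primeCompl N)
  let e : p.ResidueField ⊗[Localization.AtPrime p] LocalizedModule p.primeCompl N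
      ≃ₗ[p.ResidueField] p.Fiber N :=
    (LocalizedModule.equivTensorProduct p.primeCompl N).baseChange _ _ _ _ ≪≫ₗ
      TensorProduct.AlgebraTensorModule.cancelBaseChange A (Localization.AtPrime p) p.ResidueField
        p.ResidueField N
  rw [moduleMu_eq_finrank_residueField_tensorProduct, e.finrank_eq]

theorem notMem_span_image_compl_of_card_eq_moduleMu {ι : Type*} [Finite ι] {x : ι → N}
    (hspan : Submodule.span A (Set.range x) = ⊤) (hcard : (Nat.card ι : ℕ∞) = moduleMu A N)
    (k : ι) : x k ∉ Submodule.span A (x '' {k}ᶜ) := by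
  intro hk
  have hspan' : Submodule.span A (x '' {k}ᶜ) = ⊤ := by
    rw [← hspan, ← Submodule.span_insert_eq_span hk, ← Set.image_insert_eq, Set.insert_eq,
      Set.union_compl_self, Set.image_univ]
  have hlt : ({k}ᶜ : Set ι).encard < Nat.card ι := by
    rw [← ENat.card_eq_coe_natCard, ← Set.encard_univ]
    exact Set.toFinite _ |>.encard_lt_encard (by simp [Set.ssubset_univ_iff])
  exact (hcard.trans_le ((moduleMu_le_encard hspan').trans (Set.encard_image_le _ _))).not_gt hlt

end NumberOfGenerators

section BaseChange

variable {A N : Type*} [CommRing A] [AddCommGroup N] [Module A N]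

theorem ker_mkQ_baseChange_span_singleton (B : Type*) [Ring B] [Algebra A B] (y : N) :
    LinearMap.ker ((Submodule.span A {y}).mkQ.baseChange B) =
      Submodule.span B {(1 : B) ⊗ₜ[A] y} := by
  have hexact := lTensor_exact B (LinearMap.exact_subtype_mkQ (Submodule.span A {y}))
    (Submodule.mkQ_surjective _)
  have hspan : Submodule.span B {(1 : B) ⊗ₜ[A] y} = (Submodule.span A {y}).baseChange B := by
    rw [Submodule.baseChange_span, Set.image_singleton]
    rfl
  ext z
  rw [hspan]
  exact hexact z

theorem finrank_tensorProduct_quotient_span_singleton [Module.Finite A N] (K : Type*) [Field K]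
    [Algebra A K] {y : N} (hy : (1 : K) ⊗ₜ[A] y ≠ 0) :
    Module.finrank K (K ⊗[A] (N ⧸ Submodule.span A {y})) = Module.finrank K (K ⊗[A] N) - 1 := by
  have hsurj := LinearMap.baseChange_surjective K (Submodule.mkQ_surjective (Submodule.span A {y}))
  rw [← ((Submodule.span A {y}).mkQ.baseChange K |>.quotKerEquivOfSurjective hsurj).finrank_eq,
    ker_mkQ_baseChange_span_singleton, Submodule.finrank_quotient, finrank_span_singleton hy]

theorem mem_smul_top_of_one_tmul_eq_zero (p : Ideal A) [p.IsMaximal] {y : N}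
    (hy : (1 : p.ResidueField) ⊗ₜ[A] y = 0) : y ∈ p • (⊤ : Submodule A N) := by
  rw [← LinearMap.ker_tensorProductMk, LinearMap.mem_ker, TensorProduct.mk_apply]
  let e : p.ResidueField ≃ₐ[A] A ⧸ p :=
    (AlgEquiv.ofBijective (IsScalarTower.toAlgHom A (A ⧸ p) p.ResidueField)
      p.bijective_algebraMap_quotient_residueField).symm
  simpa using congrArg (e.toLinearMap.rTensor N) hy

theorem one_tmul_eq_zero_of_one_tmul_smul_eq_zero {p : Ideal A} [p.IsPrime] {a : A}
    (ha : a ∉ p) {y : N} (hy : (1 : p.ResidueField) ⊗ₜ[A] (a • y) = 0) :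
    (1 : p.ResidueField) ⊗ₜ[A] y = 0 := by
  rw [TensorProduct.tmul_smul, ← algebraMap_smul p.ResidueField a] at hy
  exact (smul_eq_zero.1 hy).resolve_left (mt Ideal.algebraMap_residueField_eq_zero.1 ha)

theorem subsingleton_tensorProduct_of_forall_one_tmul_eq_zero {B : Type*} [Ring B]
    [Algebra A B] {s : Set N} (hs : Submodule.span A s = ⊤)
    (h : ∀ y ∈ s, (1 : B) ⊗ₜ[A] y = 0) : Subsingleton (B ⊗[A] N) := by
  have : (⊤ : Submodule B (B ⊗[A] N)) = ⊥ := by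
    rw [← Submodule.baseChange_top, ← hs, Submodule.baseChange_span, Submodule.span_eq_bot]
    rintro _ ⟨y, hy, rfl⟩
    exact h y hy
  exact (Submodule.subsingleton_iff B).1 (subsingleton_of_bot_eq_top this.symm)

end BaseChange

theorem moduleMu_localizedModule_quotient_span_singleton {A N : Type} [CommRing A]
    [AddCommGroup N] [Module A N] [Module.Finite A N] (p : Ideal A) [p.IsPrime] {y : N}
    (hy : Nontrivial (p.Fiber N) → (1 : p.ResidueField) ⊗ₜ[A] y ≠ 0) :
    moduleMu (Localization.AtPrime p)
        (LocalizedModule p.primeCompl (N ⧸ Submodule.span A {y})) =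
      moduleMu (Localization.AtPrime p) (LocalizedModule p.primeCompl N) - 1 := by
  rw [moduleMu_localizedModule_eq_finrank_fiber, moduleMu_localizedModule_eq_finrank_fiber]
  obtain hsub | hnt := subsingleton_or_nontrivial (p.Fiber N)
  · have : Subsingleton (p.Fiber (N ⧸ Submodule.span A {y})) :=
      (LinearMap.baseChange_surjective p.ResidueField (Submodule.mkQ_surjective _)).subsingleton
    rw [Module.finrank_zero_of_subsingleton, Module.finrank_zero_of_subsingleton, Nat.cast_zero,
      zero_tsub]
  · rw [finrank_tensorProduct_quotient_span_singleton p.ResidueField (hy hnt), ENat.natCast_sub,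
      Nat.cast_one]

theorem infinite_of_infinite_residueField (A N : Type*) [CommRing A] [IsLocalRing A]
    [Infinite (IsLocalRing.ResidueField A)] [AddCommGroup N] [Module A N] [Nontrivial N] :
    Infinite N := by
  obtain ⟨y, hy⟩ := exists_ne (0 : N)
  obtain ⟨g, hg⟩ := (IsLocalRing.residue_surjective (R := A)).hasRightInverse
  refine Infinite.of_injective (fun c => g c • y) fun c c' hcc' => ?_
  by_contra hne
  have hunit : IsUnit (g c - g c') := by
    rwa [← IsLocalRing.residue_ne_zero_iff_isUnit, map_sub, hg, hg, sub_ne_zero]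
  exact hy (hunit.smul_eq_zero.1 (by rw [sub_smul, sub_eq_zero]; exact hcc'))

theorem exists_mem_forall_notMem_of_not_le {A N ι : Type*} [CommRing A] [IsLocalRing A]
    [Infinite (IsLocalRing.ResidueField A)] [AddCommGroup N] [Module A N] [Finite ι]
    {V : Submodule A N} {Q : ι → Submodule A N} (hQ : ∀ i, ¬ V ≤ Q i) : ∃ v ∈ V, ∀ i, v ∉ Q i := by
  have := Fintype.ofFinite ι
  by_contra! hcover
  obtain ⟨i, -, hi⟩ := Submodule.exists_finiteIndex_of_cover (s := Finset.univ)
    (p := fun i => (Q i).submoduleOf V)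
    (Set.eq_univ_of_forall fun v => by simpa using! hcover v v.2)
  have : Finite (V ⧸ (Q i).submoduleOf V) := AddSubgroup.finite_quotient_of_finiteIndex
  have : Nontrivial (V ⧸ (Q i).submoduleOf V) := by
    rw [Submodule.Quotient.nontrivial_iff, Ne, Submodule.submoduleOf_eq_top]
    exact hQ i
  have := infinite_of_infinite_residueField A (V ⧸ (Q i).submoduleOf V)
  exact not_finite (V ⧸ (Q i).submoduleOf V)

section Graded

variable {R₀ R 𝒜}

omit [GradedAlgebra 𝒜] in
theorem IsStandardGraded.isUnit_of_mem_zero (h𝒜 : IsStandardGraded R₀ R 𝒜) [IsLocalRing R₀]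
    [Ring.KrullDimLE 0 R₀] {p : Ideal R} [p.IsPrime] {a : R} (ha : a ∈ 𝒜 0)
    (hap : a ∉ p) : IsUnit a := by
  rw [h𝒜.1, Submodule.mem_span_singleton] at ha
  obtain ⟨r, rfl⟩ := ha
  rw [← Algebra.algebraMap_eq_smul_one] at hap ⊢
  have hmax : (p.comap (algebraMap R₀ R)).IsMaximal := Ideal.isMaximal_of_isPrime _
  refine IsUnit.map _ (IsLocalRing.notMem_maximalIdeal.1 ?_)
  rwa [← IsLocalRing.eq_maximalIdeal hmax]

theorem sub_decompose_zero_mem_irrelevantIdeal (a : R) :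
    a - (DirectSum.decompose 𝒜 a 0 : R) ∈ irrelevantIdeal R₀ R 𝒜 := by
  change _ ∈ HomogeneousIdeal.irrelevant 𝒜
  rw [HomogeneousIdeal.mem_irrelevant_iff, map_sub, GradedRing.proj_apply, GradedRing.proj_apply,
    DirectSum.decompose_of_mem_same 𝒜 (SetLike.coe_mem _), sub_self]

theorem isHomogeneous_of_irrelevantIdeal_le {I : Ideal R}
    (hI : irrelevantIdeal R₀ R 𝒜 ≤ I) : I.IsHomogeneous 𝒜 := by
  rintro (_ | i) a ha
  · simpa using I.sub_mem ha (hI (sub_decompose_zero_mem_irrelevantIdeal (𝒜 := 𝒜) a))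
  · exact hI (HomogeneousIdeal.mem_irrelevant_of_mem 𝒜 i.succ_pos (SetLike.coe_mem _))

theorem IsStandardGraded.irrelevantIdeal_le (h𝒜 : IsStandardGraded R₀ R 𝒜) {I : Ideal R}
    (hI : ∀ l ∈ 𝒜 1, l ∈ I) : irrelevantIdeal R₀ R 𝒜 ≤ I := by
  refine (HomogeneousIdeal.toIdeal_irrelevant_le 𝒜).2 ?_
  rintro (_ | n) hn a ha
  · exact absurd hn (lt_irrefl 0)
  · change a ∈ 𝒜 (n + 1) at ha
    rw [h𝒜.2 n] at ha
    exact Submodule.mul_induction_on ha (fun l hl b _ => I.mul_mem_right b (hI l hl))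
      fun _ _ => I.add_mem

theorem IsStandardGraded.isMaximal_of_irrelevantIdeal_le (h𝒜 : IsStandardGraded R₀ R 𝒜)
    [IsLocalRing R₀] [Ring.KrullDimLE 0 R₀] {p : Ideal R} [p.IsPrime]
    (hp : irrelevantIdeal R₀ R 𝒜 ≤ p) : p.IsMaximal := by
  refine Ideal.isMaximal_iff.2 ⟨p.one_notMem, fun J a hpJ hap haJ => ?_⟩
  have ha := sub_decompose_zero_mem_irrelevantIdeal (𝒜 := 𝒜) a
  have hunit : IsUnit (DirectSum.decompose 𝒜 a 0 : R) :=
    h𝒜.isUnit_of_mem_zero (p := p) (SetLike.coe_mem _) fun h => hap (by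
      simpa using p.add_mem (hp ha) h)
  rw [← J.eq_top_iff_one]
  exact J.eq_top_of_isUnit_mem (by simpa using J.sub_mem haJ (hpJ (hp ha))) hunit

section GradedModule

variable {M : Type} [AddCommGroup M] [Module R M] {ℳ : ℤ → AddSubgroup M}

theorem IsCompatibleGrading.coe_decompose_smul [DirectSum.Decomposition ℳ]
    (hℳ : IsCompatibleGrading R₀ R 𝒜 M ℳ) {e : ℤ} {y : M} (hy : y ∈ ℳ e) (d : ℤ) (a : R) :
    (DirectSum.decompose ℳ (a • y) d : M) =
      (if e ≤ d then (DirectSum.decompose 𝒜 a (d - e).toNat : R) else 0) • y := by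
  induction a using DirectSum.Decomposition.inductionOn 𝒜 with
  | zero => simp
  | @homogeneous i a =>
    have hay := hℳ.2 i e a y a.2 hy
    by_cases hd : (i : ℤ) + e = d
    · obtain rfl : (d - e).toNat = i := by omega
      rw [hd] at hay
      rw [DirectSum.decompose_of_mem_same ℳ hay, if_pos (by omega),
        DirectSum.decompose_of_mem_same 𝒜 a.2]
    · rw [DirectSum.decompose_of_mem_ne ℳ hay hd]
      split_ifs with hed
      · rw [DirectSum.decompose_of_mem_ne 𝒜 a.2 (by omega), zero_smul]
      · rw [zero_smul]
  | add a b ha hb =>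
    rw [add_smul, DirectSum.decompose_add, DirectSum.add_apply, AddSubgroup.coe_add, ha, hb,
      ← add_smul, DirectSum.decompose_add]
    split_ifs <;> simp

theorem IsCompatibleGrading.notMem_smul_top_of_notMem_span_image_compl
    (hℳ : IsCompatibleGrading R₀ R 𝒜 M ℳ) {I : Ideal R} (hI : I.IsHomogeneous 𝒜)
    (hunit : ∀ a ∈ I, a ∈ 𝒜 0 → IsUnit (1 - a)) {σ : Type*} {x : σ → M} {d : σ → ℤ}
    (hx : ∀ j, x j ∈ ℳ (d j)) (hspan : Submodule.span R (Set.range x) = ⊤) {k : σ}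
    (hk : x k ∉ Submodule.span R (x '' {k}ᶜ)) : x k ∉ I • (⊤ : Submodule R M) := by
  classical
  let _ := hℳ.1.chooseDecomposition
  rw [← hspan, Submodule.mem_ideal_smul_span_iff_exists_sum]
  rintro ⟨a, ha, hsum⟩
  -- In the degree `d k` part of `hsum`, the coefficient of `x k` lies in `I ∩ 𝒜 0`.
  let b (j : σ) : R :=
    if d j ≤ d k then (DirectSum.decompose 𝒜 (a j) (d k - d j).toNat : R) else 0
  have hbI (j : σ) : b j ∈ I := by
    simp only [b]
    split_ifs
    exacts [hI _ (ha j), I.zero_mem]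
  have hcomponent : ∑ j ∈ insert k a.support, b j • x j = x k :=
    calc ∑ j ∈ insert k a.support, b j • x j
        = ∑ j ∈ insert k a.support, (DirectSum.decompose ℳ (a j • x j) (d k) : M) :=
          Finset.sum_congr rfl fun j _ => (hℳ.coe_decompose_smul (hx j) (d k) (a j)).symm
      _ = DirectSum.decompose ℳ (x k) (d k) := by
          rw [← hsum, a.sum_of_support_subset (Finset.subset_insert k _) _ (by simp),
            DirectSum.decompose_sum, DirectSum.sum_apply, AddSubgroup.val_finsetSum]
      _ = x k := DirectSum.decompose_of_mem_same ℳ (hx k)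
  have hb₀ : b k ∈ 𝒜 0 := by
    have : b k ∈ 𝒜 (d k - d k).toNat := by simp only [b, le_refl, if_true, SetLike.coe_mem]
    rwa [sub_self, Int.toNat_zero] at this
  refine hk ((Submodule.smul_mem_iff_of_isUnit _ (hunit (b k) (hbI k) hb₀)).1 ?_)
  rw [sub_smul, one_smul]
  nth_rw 1 [← hcomponent]
  rw [← Finset.add_sum_erase _ _ (Finset.mem_insert_self k _), add_sub_cancel_left]
  exact Submodule.sum_mem _ fun j hj => Submodule.smul_mem _ _
    (Submodule.subset_span (Set.mem_image_of_mem x (Finset.ne_of_mem_erase hj)))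

section Fiber

variable {σ : Type*} {x : σ → M} {d : σ → ℤ} {k : σ} {p : Ideal R} [p.IsPrime]

theorem IsCompatibleGrading.exists_mem_one_tmul_ne_zero_of_notMem
    (hℳ : IsCompatibleGrading R₀ R 𝒜 M ℳ) (hx : ∀ j, x j ∈ ℳ (d j))
    (hspan : Submodule.span R (Set.range x) = ⊤) (hle : ∀ j, d j ≤ d k)
    [Nontrivial (p.Fiber M)] {l : R} (hl : l ∈ 𝒜 1) (hlp : l ∉ p) :
    ∃ y ∈ ℳ (d k), (1 : p.ResidueField) ⊗ₜ[R] y ≠ 0 := by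
  by_contra! hzero
  refine not_subsingleton (p.Fiber M)
    (subsingleton_tensorProduct_of_forall_one_tmul_eq_zero hspan ?_)
  rintro _ ⟨j, rfl⟩
  have hdeg : l ^ (d k - d j).toNat • x j ∈ ℳ (d k) := by
    have := hℳ.2 _ _ _ _ (SetLike.pow_mem_graded (d k - d j).toNat hl) (hx j)
    rwa [smul_eq_mul, mul_one, Int.toNat_sub_of_le (hle j), sub_add_cancel] at this
  exact one_tmul_eq_zero_of_one_tmul_smul_eq_zero
    (fun h => hlp (Ideal.IsPrime.mem_of_pow_mem inferInstance _ h))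
    (hzero _ hdeg)

theorem IsCompatibleGrading.one_tmul_ne_zero_of_irrelevantIdeal_le [IsLocalRing R₀]
    [Ring.KrullDimLE 0 R₀] (h𝒜 : IsStandardGraded R₀ R 𝒜)
    (hℳ : IsCompatibleGrading R₀ R 𝒜 M ℳ) (hx : ∀ j, x j ∈ ℳ (d j))
    (hspan : Submodule.span R (Set.range x) = ⊤) (hk : x k ∉ Submodule.span R (x '' {k}ᶜ))
    (hp : irrelevantIdeal R₀ R 𝒜 ≤ p) : (1 : p.ResidueField) ⊗ₜ[R] x k ≠ 0 := by
  have := h𝒜.isMaximal_of_irrelevantIdeal_le hp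
  have hunit (a : R) (hap : a ∈ p) (ha : a ∈ 𝒜 0) : IsUnit (1 - a) :=
    h𝒜.isUnit_of_mem_zero (p := p) (Submodule.sub_mem _ SetLike.GradedOne.one_mem ha)
      fun h => p.one_notMem (by simpa using p.add_mem h hap)
  exact fun h => hℳ.notMem_smul_top_of_notMem_span_image_compl
    (isHomogeneous_of_irrelevantIdeal_le hp) hunit hx hspan hk
    (mem_smul_top_of_one_tmul_eq_zero p h)

theorem IsCompatibleGrading.exists_mem_one_tmul_ne_zero [IsLocalRing R₀] [Ring.KrullDimLE 0 R₀]
    (h𝒜 : IsStandardGraded R₀ R 𝒜) (hℳ : IsCompatibleGrading R₀ R 𝒜 M ℳ)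
    (hx : ∀ j, x j ∈ ℳ (d j)) (hspan : Submodule.span R (Set.range x) = ⊤)
    (hle : ∀ j, d j ≤ d k) (hk : x k ∉ Submodule.span R (x '' {k}ᶜ)) [Nontrivial (p.Fiber M)] :
    ∃ y ∈ ℳ (d k), (1 : p.ResidueField) ⊗ₜ[R] y ≠ 0 := by
  by_cases hp : ∀ l ∈ 𝒜 1, l ∈ p
  · exact ⟨x k, hx k, hℳ.one_tmul_ne_zero_of_irrelevantIdeal_le h𝒜 hx hspan hk
      (h𝒜.irrelevantIdeal_le hp)⟩
  · push Not at hp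
    obtain ⟨l, hl, hlp⟩ := hp
    exact hℳ.exists_mem_one_tmul_ne_zero_of_notMem hx hspan hle hl hlp

end Fiber

theorem IsCompatibleGrading.exists_mem_forall_notMem [IsLocalRing R₀]
    [Infinite (IsLocalRing.ResidueField R₀)] (hℳ : IsCompatibleGrading R₀ R 𝒜 M ℳ) {ι : Type*}
    [Finite ι] (Q : ι → Submodule R M) {e : ℤ} (h : ∀ i, ∃ y ∈ ℳ e, y ∉ Q i) :
    ∃ y ∈ ℳ e, ∀ i, y ∉ Q i := by
  let _ : Module R₀ M := Module.compHom M (algebraMap R₀ R)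
  have : IsScalarTower R₀ R M := .of_algebraMap_smul fun _ _ => rfl
  let V : Submodule R₀ M :=
    { ℳ e with
      smul_mem' := fun r y hy => by
        simpa using hℳ.2 0 e (algebraMap R₀ R r) y (SetLike.algebraMap_mem_graded 𝒜 r) hy }
  have hQ (i : ι) : ¬ V ≤ (Q i).restrictScalars R₀ := fun hle =>
    let ⟨_, hy, hne⟩ := h i
    hne (hle hy)
  exact exists_mem_forall_notMem_of_not_le hQ

end GradedModule

end Graded

theorem exists_homogeneous_element_reducing_local_number_of_generators_general
    {R₀ : Type} [CommRing R₀] [IsLocalRing R₀] [Ring.KrullDimLE 0 R₀]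
    [Infinite (IsLocalRing.ResidueField R₀)]
    {R : Type} [CommRing R] [Algebra R₀ R]
    {𝒜 : ℕ → Submodule R₀ R} [GradedAlgebra 𝒜] (h𝒜 : IsStandardGraded R₀ R 𝒜)
    {M : Type} [AddCommGroup M] [Module R M] [Module.Finite R M]
    {ℳ : ℤ → AddSubgroup M} (hℳ : IsCompatibleGrading R₀ R 𝒜 M ℳ)
    {σ : Type*} {x : σ → M} {d : σ → ℤ} {k : σ} (hle : ∀ j, d j ≤ d k)
    (hx : ∀ j, x j ∈ ℳ (d j)) (hspan : Submodule.span R (Set.range x) = ⊤)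
    (hk : x k ∉ Submodule.span R (x '' {k}ᶜ))
    {ι : Type*} [Finite ι] (p : ι → PrimeSpectrum R) :
    ∃ x₀ ∈ ℳ (d k), ∀ i,
      moduleMu (Localization.AtPrime (p i).asIdeal)
          (LocalizedModule (p i).asIdeal.primeCompl (M ⧸ Submodule.span R {x₀})) =
        moduleMu (Localization.AtPrime (p i).asIdeal)
          (LocalizedModule (p i).asIdeal.primeCompl M) - 1 := by
  let Q (i : {i // Nontrivial ((p i).asIdeal.Fiber M)}) : Submodule R M :=
    LinearMap.ker (TensorProduct.mk R (p i).asIdeal.ResidueField M 1)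
  obtain ⟨x₀, hx₀, hne⟩ := hℳ.exists_mem_forall_notMem Q fun i =>
    have := i.2
    hℳ.exists_mem_one_tmul_ne_zero h𝒜 hx hspan hle hk
  exact ⟨x₀, hx₀, fun i =>
    moduleMu_localizedModule_quotient_span_singleton _ fun hnt => hne ⟨i, hnt⟩⟩

/-- **(Lemma 4.2 / `Lprime`)** Let `R` be a standard positively graded Noetherian ring whose
base ring `(R₀, 𝔪₀)` is Artinian local with infinite residue field, and let `M` be a
finitely generated graded `R`-module minimally generated by homogeneous elements of
degrees `d_1 ≥ … ≥ d_s`.  Then for any finite set `{𝔭_1, …, 𝔭_n}` of homogeneous prime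
ideals there is a homogeneous element `x ∈ M` of degree `d_1` such that
`μ((M/Rx)_{𝔭_i}) = max {0, μ(M_{𝔭_i}) - 1}` for all `i`. -/
theorem exists_homogeneous_element_reducing_local_number_of_generators
    (R₀ : Type) [CommRing R₀] [IsArtinianRing R₀] [IsLocalRing R₀]
    [Infinite (IsLocalRing.ResidueField R₀)]
    (R : Type) [CommRing R] [IsNoetherianRing R] [Algebra R₀ R]
    (𝒜 : ℕ → Submodule R₀ R) [GradedAlgebra 𝒜] (hstd : IsStandardGraded R₀ R 𝒜)
    (M : Type) [AddCommGroup M] [Module R M] [Module.Finite R M]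
    (ℳ : ℤ → AddSubgroup M) (hℳ : IsCompatibleGrading R₀ R 𝒜 M ℳ)
    -- a minimal homogeneous generating set of degrees `d_1 ≥ … ≥ d_s`
    (s : ℕ) (hs : 0 < s) (x : Fin s → M) (dg : Fin s → ℤ)
    (hanti : ∀ i j : Fin s, i ≤ j → dg j ≤ dg i)
    (hxdeg : ∀ i, x i ∈ ℳ (dg i))
    (hxspan : Submodule.span R (Set.range x) = ⊤)
    (hxmin : (s : ℕ∞) = moduleMu R M)
    -- a finite set of homogeneous prime ideals
    (n : ℕ) (p : Fin n → PrimeSpectrum R)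
    (hphom : ∀ i, (p i).asIdeal.IsHomogeneous 𝒜) :
    ∃ x₀ : M, x₀ ∈ ℳ (dg ⟨0, hs⟩) ∧
      ∀ i : Fin n,
        moduleMu (Localization.AtPrime (p i).asIdeal)
          (LocalizedModule (p i).asIdeal.primeCompl (M ⧸ Submodule.span R {x₀})) =
        moduleMu (Localization.AtPrime (p i).asIdeal)
          (LocalizedModule (p i).asIdeal.primeCompl M) - 1 :=
  exists_homogeneous_element_reducing_local_number_of_generators_general hstd hℳ
    (fun j => hanti _ j (Nat.zero_le _)) hxdeg hxspan
    (notMem_span_image_compl_of_card_eq_moduleMu hxspan (by simpa using hxmin) _) p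

end
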